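/- Let r, s ∈ ℂ with 4r + s ≠ 0, set p = 2r + s and q = s(s − 2r)/(4r + s), and assume p·s ≠ 0. Let 𝒜 ⊂ (ℂ⁴)* consist of the covectors e^1, e^2, e^3 each with multiplicity p, e^4 with multiplicity q, e^i ± e^j (1 ≤ i < j ≤ 3) each with multiplicity r, and (1/2)(e^1 ± e^2 ± e^3 ± e^4) (all eight sign choices) each with multiplicity s. Then (𝒜,c) is a trigonometric ∨-system, and for any λ ∈ ℂ with λ² = 108(2r+s)²/(4r+s), the triple (𝒜,c,λ) satisfies the trigonometric WDVV equations. -/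

import Mathlib

open scoped Classical
open Finset

noncomputable section

/-- Evaluation of a covector `α` on a vector `x` in `ℂ^N`. -/
def ev {N : ℕ} (α x : Fin N → ℂ) : ℂ := ∑ i, α i * x i

/-- The bilinear form `G_𝒜` associated to a configuration. -/
def Gform {N : ℕ} (A : Finset (Fin N → ℂ)) (c : (Fin N → ℂ) → ℂ)
    (u v : Fin N → ℂ) : ℂ :=
  ∑ α ∈ A, c α * ev α u * ev α v

/-- `(α ∧ β)(a, b) = α(a)β(b) - α(b)β(a)`. -/
def wedge {N : ℕ} (α β a b : Fin N → ℂ) : ℂ :=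
  ev α a * ev β b - ev α b * ev β a

/-- Non-degeneracy of `G_𝒜`. -/
def Nondeg {N : ℕ} (A : Finset (Fin N → ℂ)) (c : (Fin N → ℂ) → ℂ) : Prop :=
  ∀ u : Fin N → ℂ, (∀ v : Fin N → ℂ, Gform A c u v = 0) → u = 0

/-- `dual` assigns to each covector `γ ∈ 𝒜` its `G_𝒜`-dual vector `γ^∨`. -/
def IsDual {N : ℕ} (A : Finset (Fin N → ℂ)) (c : (Fin N → ℂ) → ℂ)
    (dual : (Fin N → ℂ) → Fin N → ℂ) : Prop :=
  ∀ γ ∈ A, ∀ v : Fin N → ℂ, Gform A c (dual γ) v = ev γ v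

/-- `γ` is proportional to `α`. -/
def Collin {N : ℕ} (α γ : Fin N → ℂ) : Prop := ∃ t : ℂ, γ = t • α

/-- `γ₁ ∼ γ₂` iff `γ₁ + γ₂` or `γ₁ - γ₂` is an integer multiple of `α`. -/
def SeriesRel {N : ℕ} (α γ₁ γ₂ : Fin N → ℂ) : Prop :=
  ∃ m : ℤ, γ₁ + γ₂ = (m : ℂ) • α ∨ γ₁ - γ₂ = (m : ℂ) • α

/-- `Γ` is an (maximal) `α`-series of the configuration `A`. -/
def IsSeries {N : ℕ} (A : Finset (Fin N → ℂ)) (α : Fin N → ℂ)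
    (Γ : Finset (Fin N → ℂ)) : Prop :=
  Γ.Nonempty ∧ (∀ γ ∈ Γ, γ ∈ A ∧ ¬ Collin α γ) ∧
    (∀ γ₁ ∈ Γ, ∀ γ₂ ∈ Γ, SeriesRel α γ₁ γ₂) ∧
    (∀ β ∈ A, ¬ Collin α β → (∃ γ ∈ Γ, SeriesRel α β γ) → β ∈ Γ)

/-- The trigonometric ∨-conditions. -/
def IsTrigVSystem {N : ℕ} (A : Finset (Fin N → ℂ)) (c : (Fin N → ℂ) → ℂ)
    (dual : (Fin N → ℂ) → Fin N → ℂ) : Prop :=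
  ∀ α ∈ A, ∀ Γ : Finset (Fin N → ℂ), IsSeries A α Γ →
    ∀ a b : Fin N → ℂ, ∑ β ∈ Γ, c β * ev α (dual β) * wedge α β a b = 0

/-- The form `G^{(1)}_𝒜` evaluated at `(u, v)`. -/
def G1form {N : ℕ} (A : Finset (Fin N → ℂ)) (c : (Fin N → ℂ) → ℂ)
    (u v : Fin N → ℂ) : ℂ :=
  ∑ α ∈ A, ∑ β ∈ A, c α * c β * wedge α β u v ^ 2

/-- The form `G^{(2)}_𝒜` evaluated at `(u, v)`. -/
def G2form {N : ℕ} (A : Finset (Fin N → ℂ)) (c : (Fin N → ℂ) → ℂ)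
    (dual : (Fin N → ℂ) → Fin N → ℂ) (u v : Fin N → ℂ) : ℂ :=
  ∑ α ∈ A, ∑ β ∈ A,
    c α * c β * Gform A c (dual α) (dual β) * wedge α β u v ^ 2

/-- Complex cotangent. -/
def ccot (z : ℂ) : ℂ := Complex.cos z / Complex.sin z

/-- The matrix `F_i(x)` of third derivatives of the prepotential, `1 ≤ i ≤ N`. -/
def Fmat {N : ℕ} (A : Finset (Fin N → ℂ)) (c : (Fin N → ℂ) → ℂ) (lam : ℂ)
    (i : Fin N) (x : Fin N → ℂ) : Matrix (Fin N ⊕ Unit) (Fin N ⊕ Unit) ℂ :=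
  Matrix.of fun p q =>
    match p, q with
    | Sum.inl p, Sum.inl q => lam * ∑ α ∈ A, c α * α i * α p * α q * ccot (ev α x)
    | Sum.inl p, Sum.inr _ => 2 * ∑ α ∈ A, c α * α i * α p
    | Sum.inr _, Sum.inl q => 2 * ∑ α ∈ A, c α * α i * α q
    | Sum.inr _, Sum.inr _ => 0

/-- The constant matrix `F_{N+1}`. -/
def Flast {N : ℕ} (A : Finset (Fin N → ℂ)) (c : (Fin N → ℂ) → ℂ) :
    Matrix (Fin N ⊕ Unit) (Fin N ⊕ Unit) ℂ :=
  Matrix.of fun p q =>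
    match p, q with
    | Sum.inl p, Sum.inl q => 2 * ∑ α ∈ A, c α * α p * α q
    | Sum.inr _, Sum.inr _ => 2
    | _, _ => 0

/-- `(𝒜, c, λ)` satisfies the trigonometric WDVV equations. -/
def SatisfiesWDVV {N : ℕ} (A : Finset (Fin N → ℂ)) (c : (Fin N → ℂ) → ℂ)
    (lam : ℂ) : Prop :=
  IsUnit (Flast A c) ∧
    ∀ x : Fin N → ℂ, (∀ α ∈ A, Complex.sin (ev α x) ≠ 0) →
      ∀ i j : Fin N,
        Fmat A c lam i x * (Flast A c)⁻¹ * Fmat A c lam j x =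
          Fmat A c lam j x * (Flast A c)⁻¹ * Fmat A c lam i x

/-- The covectors of `𝒜` lie in a lattice of full rank `N` in `(ℂ^N)^*`. -/
def InLattice {N : ℕ} (A : Finset (Fin N → ℂ)) : Prop :=
  ∃ L : Fin N → Fin N → ℂ, LinearIndependent ℂ L ∧
    ∀ α ∈ A, ∃ m : Fin N → ℤ, α = ∑ i, (m i : ℂ) • L i

/-- No two covectors of `𝒜` are negatively proportional. -/
def PositiveSystem {N : ℕ} (A : Finset (Fin N → ℂ)) : Prop :=
  ∀ α ∈ A, ∀ t : ℝ, t < 0 → (t : ℂ) • α ∉ A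

/-- The standard covector `e^i` of `(ℂ^4)^*`. -/
def esgl4 (i : Fin 4) : Fin 4 → ℂ := Pi.single i 1

/-- A sign `±1` attached to a boolean. -/
def sgn (b : Bool) : ℂ := if b then 1 else -1

/-- The covector `(1/2)(e^1 ± e^2 ± e^3 ± e^4)` attached to a triple of signs. -/
def halfvec (b : Bool × Bool × Bool) : Fin 4 → ℂ :=
  (1 / 2 : ℂ) • (esgl4 0 + sgn b.1 • esgl4 1 + sgn b.2.1 • esgl4 2 + sgn b.2.2 • esgl4 3)

/-- The configuration of Proposition `4-dim trig. sys.`: the covectors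
`e^1, e^2, e^3, e^4`, `e^i ± e^j` (`1 ≤ i < j ≤ 3`) and `(1/2)(e^1 ± e^2 ± e^3 ± e^4)`. -/
def A4dim : Finset (Fin 4 → ℂ) :=
  ({esgl4 0, esgl4 1, esgl4 2, esgl4 3} : Finset (Fin 4 → ℂ)) ∪
  ((Finset.univ.filter (fun p : Fin 4 × Fin 4 => p.1 < p.2 ∧ p.2 ≠ 3)).image
    (fun p => esgl4 p.1 + esgl4 p.2)) ∪
  ((Finset.univ.filter (fun p : Fin 4 × Fin 4 => p.1 < p.2 ∧ p.2 ≠ 3)).image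
    (fun p => esgl4 p.1 - esgl4 p.2)) ∪
  ((Finset.univ : Finset (Bool × Bool × Bool)).image halfvec)

/-!
Let `ξ` pair with every covector of `𝒜` to a positive integer. The upper left block of
`F_i F_{N+1}⁻¹ F_j - F_j F_{N+1}⁻¹ F_i` is, up to a constant matrix, a quadratic expression in the
functions `cot α(x)`. On a generic line `x + t ξ` this expression is a rational function of
`exp (2it)` with simple poles and no pole at infinity. The residue at a zero of `sin α` is a sum
over `α`-series in which the ∨-conditions apply to each series separately, because `α ∧ β cot β` is
constant along a series there. The expression is therefore constant on the line, and its value is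
read off as `t → i∞`, where all cotangents equal `-i`. Comparison with the constant matrix leaves
the identity `λ² G⁽²⁾ = 4 G⁽¹⁾` on `Λ²V ⊗ Λ²V`, which polarisation reduces to its diagonal values.

In the four-dimensional family `G_𝒜` is diagonal. After clearing the common denominator
`12 (2r + s)`, each ∨-condition is linear in `r` and `s` with integer coefficients, so it is a
finite check. The forms `G⁽¹⁾` and `G⁽²⁾` follow from the quadratic form and the cubic form of the
configuration, by the Lagrange identity.
-/

/-! ### Quadratic expressions in rational functions -/

section QuadraticRatio

open Polynomial

variable {K ι : Type*} [Field K]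

theorem exists_eq_C_mul_of_forall_isRoot [IsAlgClosed K] {p q : K[X]}
    (hq : q.Separable) (hdeg : p.natDegree ≤ q.natDegree)
    (hroot : ∀ z, q.IsRoot z → p.IsRoot z) : ∃ a : K, p = C a * q := by
  by_cases hp : p = 0
  · exact ⟨0, by simp [hp]⟩
  have hdvd : q ∣ p := (IsAlgClosed.dvd_iff_roots_le_roots hq.ne_zero hp).2 <|
    (Multiset.le_iff_subset (nodup_roots hq)).2 fun z hz =>
      (mem_roots hp).2 (hroot z (isRoot_of_mem_roots hz))
  obtain ⟨a, rfl⟩ := hdvd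
  have ha : a.natDegree = 0 := by
    have := natDegree_mul hq.ne_zero (right_ne_zero_of_mul hp)
    omega
  exact ⟨a.coeff 0, by rw [← eq_C_of_natDegree_eq_zero ha, mul_comm]⟩

/-- Numerator over the common denominator `∏ i ∈ s, Q i` of the quadratic expression
`∑ i, ∑ j, w i j * (P i / Q i) * (P j / Q j)` in rational functions; the diagonal coefficients
`w i i` are left out. -/
def quadraticNumerator (s : Finset ι) (P Q : ι → K[X]) (w : ι → ι → K) : K[X] :=
  ∑ i ∈ s, ∑ j ∈ s.erase i, C (w i j) * (P i * P j * ∏ k ∈ (s.erase i).erase j, Q k)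

variable {s : Finset ι} {P Q : ι → K[X]} {w : ι → ι → K}

theorem natDegree_quadraticNumerator_le
    (hdeg : ∀ i ∈ s, (P i).natDegree ≤ (Q i).natDegree) :
    (quadraticNumerator s P Q w).natDegree ≤ ∑ i ∈ s, (Q i).natDegree := by
  refine natDegree_sum_le_of_forall_le _ _ fun i hi =>
    natDegree_sum_le_of_forall_le _ _ fun j hj => ?_
  calc (C (w i j) * (P i * P j * ∏ k ∈ (s.erase i).erase j, Q k)).natDegree
      ≤ ((P i).natDegree + (P j).natDegree) + ∑ k ∈ (s.erase i).erase j, (Q k).natDegree :=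
        (natDegree_C_mul_le _ _).trans <| natDegree_mul_le.trans <|
          add_le_add natDegree_mul_le (natDegree_prod_le _ _)
    _ ≤ ((Q i).natDegree + (Q j).natDegree) + ∑ k ∈ (s.erase i).erase j, (Q k).natDegree := by
        gcongr
        exacts [hdeg i hi, hdeg j (mem_of_mem_erase hj)]
    _ = ∑ k ∈ s, (Q k).natDegree := by
        rw [← add_sum_erase s _ hi, ← add_sum_erase _ _ hj, add_assoc]

theorem eval_quadraticNumerator (hdiag : ∀ i, w i i = 0) {z : K}
    (hz : ∀ i ∈ s, (Q i).eval z ≠ 0) :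
    (quadraticNumerator s P Q w).eval z = (∏ i ∈ s, Q i).eval z *
      ∑ i ∈ s, ∑ j ∈ s, w i j * ((P i).eval z / (Q i).eval z * ((P j).eval z / (Q j).eval z)) := by
  simp only [quadraticNumerator, eval_finsetSum, mul_sum]
  refine sum_congr rfl fun i hi => ?_
  rw [← add_sum_erase s _ hi, hdiag, zero_mul, mul_zero, zero_add]
  refine sum_congr rfl fun j hj => ?_
  have hzi := hz i hi
  have hzj := hz j (mem_of_mem_erase hj)
  rw [← mul_prod_erase s _ hi, ← mul_prod_erase _ _ hj]
  simp only [eval_mul, eval_C]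
  field_simp

/-- Only the terms containing the index `i` survive at a root of `Q i`, and by symmetry they add
up to twice the residue sum. -/
theorem isRoot_quadraticNumerator (hsymm : ∀ i j, w i j = w j i) (hdiag : ∀ i, w i i = 0)
    {i : ι} (hi : i ∈ s) {z : K} (hzi : (Q i).IsRoot z)
    (hz : ∀ j ∈ s.erase i, (Q j).eval z ≠ 0)
    (hres : ∑ j ∈ s, w i j * ((P j).eval z / (Q j).eval z) = 0) :
    (quadraticNumerator s P Q w).IsRoot z := by
  set R : ι → ι → K := fun j l =>
    w j l * ((P j).eval z * (P l).eval z * ∏ k ∈ (s.erase j).erase l, (Q k).eval z) with hR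
  have hsum : (quadraticNumerator s P Q w).eval z = ∑ j ∈ s, ∑ l ∈ s.erase j, R j l := by
    simp only [quadraticNumerator, eval_finsetSum, eval_mul, eval_C, eval_prod, hR]
  have hRi : ∑ l ∈ s.erase i, R i l = 0 := by
    rw [← add_sum_erase s _ hi, hdiag, zero_mul, zero_add] at hres
    calc ∑ l ∈ s.erase i, R i l
        = (P i).eval z * (∏ k ∈ s.erase i, (Q k).eval z) *
            ∑ l ∈ s.erase i, w i l * ((P l).eval z / (Q l).eval z) := by
          rw [mul_sum]
          refine sum_congr rfl fun l hl => ?_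
          have hzl := hz l hl
          rw [hR, ← mul_prod_erase _ _ hl]
          field_simp
      _ = 0 := by rw [hres, mul_zero]
  have hother : ∀ j ∈ s.erase i, ∑ l ∈ s.erase j, R j l = R i j := fun j hj => by
    have hij : i ∈ s.erase j := mem_erase.2 ⟨(ne_of_mem_erase hj).symm, hi⟩
    rw [sum_eq_single_of_mem i hij]
    · simp only [hR, hsymm j i, mul_comm ((P j).eval z), erase_right_comm (a := j)]
    · intro l _ hli
      have hil : ∏ k ∈ (s.erase j).erase l, (Q k).eval z = 0 :=
        prod_eq_zero (mem_erase.2 ⟨hli.symm, hij⟩) hzi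
      simp only [hR, hil, mul_zero]
  rw [IsRoot, hsum, ← add_sum_erase s _ hi, sum_congr rfl hother, hRi, zero_add]

theorem exists_sum_mul_div_eq_const [IsAlgClosed K] (hsymm : ∀ i j, w i j = w j i)
    (hdiag : ∀ i, w i i = 0) (hdeg : ∀ i ∈ s, (P i).natDegree ≤ (Q i).natDegree)
    (hsep : ∀ i ∈ s, (Q i).Separable)
    (hcop : ∀ i ∈ s, ∀ j ∈ s, i ≠ j → ∀ z, (Q i).IsRoot z → ¬ (Q j).IsRoot z)
    (hres : ∀ i ∈ s, ∀ z, (Q i).IsRoot z →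
      ∑ j ∈ s, w i j * ((P j).eval z / (Q j).eval z) = 0) :
    ∃ a : K, ∀ z, (∀ i ∈ s, (Q i).eval z ≠ 0) →
      ∑ i ∈ s, ∑ j ∈ s, w i j * ((P i).eval z / (Q i).eval z * ((P j).eval z / (Q j).eval z)) =
        a := by
  have hprod : (∏ i ∈ s, Q i).Separable := separable_prod' (fun i hi j hj hij =>
    (isCoprime_iff_aeval_ne_zero_of_isAlgClosed K K _ _).2 fun z => by
      simpa only [coe_aeval_eq_eval, ← not_and_or] using fun h => hcop i hi j hj hij z h.1 h.2) hsep
  obtain ⟨a, ha⟩ := exists_eq_C_mul_of_forall_isRoot hprod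
    (p := quadraticNumerator s P Q w)
    ((natDegree_quadraticNumerator_le hdeg).trans_eq
      (natDegree_prod _ _ fun i hi => (hsep i hi).ne_zero).symm) fun z hz => by
      rw [IsRoot, eval_prod, prod_eq_zero_iff] at hz
      obtain ⟨i, hi, hzi⟩ := hz
      exact isRoot_quadraticNumerator hsymm hdiag hi hzi
        (fun j hj => hcop i hi j (mem_of_mem_erase hj) (ne_of_mem_erase hj).symm z hzi)
        (hres i hi z hzi)
  refine ⟨a, fun z hz => ?_⟩
  have hne : (∏ i ∈ s, Q i).eval z ≠ 0 := by
    rw [eval_prod]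
    exact prod_ne_zero_iff.2 hz
  apply mul_left_cancel₀ hne
  rw [← eval_quadraticNumerator hdiag hz, ha, eval_mul, eval_C, mul_comm]

end QuadraticRatio

/-! ### Series of covectors -/

section Covectors

variable {N : ℕ} (α β u v : Fin N → ℂ)

theorem ev_add_left : ev (α + β) u = ev α u + ev β u := add_dotProduct α β u

theorem ev_sub_left : ev (α - β) u = ev α u - ev β u := sub_dotProduct α β u

theorem ev_smul_left (t : ℂ) : ev (t • α) u = t * ev α u := smul_dotProduct t α u

theorem ev_add_right : ev α (u + v) = ev α u + ev α v := dotProduct_add α u v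

theorem ev_smul_right (t : ℂ) : ev α (t • u) = t * ev α u := dotProduct_smul t α u

theorem ev_single (i : Fin N) : ev α (Pi.single i 1) = α i := dotProduct_single_one α i

theorem wedge_eq_sum :
    wedge α β u v = ∑ i, ∑ j, (α i * β j - α j * β i) * (u i * v j) := by
  have hmul : ∀ α β u v : Fin N → ℂ,
      ev α u * ev β v = ∑ i, ∑ j, α i * β j * (u i * v j) := fun α β u v => by
    simp only [ev, sum_mul_sum, mul_mul_mul_comm]
  rw [wedge, mul_comm (ev α v), hmul, hmul]
  simp only [sub_mul, sum_sub_distrib, mul_comm (α _) (β _)]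

variable {α β}

theorem Collin.wedge_eq_zero (h : Collin α β) : wedge α β u v = 0 := by
  obtain ⟨t, rfl⟩ := h
  simp only [wedge, ev_smul_left]
  ring

end Covectors

namespace SeriesRel

variable {N : ℕ} {α β γ γ₁ γ₂ γ₃ : Fin N → ℂ}

protected theorem refl (α γ : Fin N → ℂ) : SeriesRel α γ γ :=
  ⟨0, .inr (by rw [sub_self, Int.cast_zero, zero_smul])⟩

protected theorem symm : SeriesRel α γ₁ γ₂ → SeriesRel α γ₂ γ₁
  | ⟨m, .inl h⟩ => ⟨m, .inl (by rw [add_comm, h])⟩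
  | ⟨m, .inr h⟩ => ⟨-m, .inr (by rw [← neg_sub, h, Int.cast_neg, neg_smul])⟩

protected theorem trans : SeriesRel α γ₁ γ₂ → SeriesRel α γ₂ γ₃ → SeriesRel α γ₁ γ₃
  | ⟨m, .inl h⟩, ⟨n, .inl k⟩ => ⟨m - n, .inr
      (by push_cast; linear_combination (norm := module) h - k)⟩
  | ⟨m, .inl h⟩, ⟨n, .inr k⟩ => ⟨m - n, .inl
      (by push_cast; linear_combination (norm := module) h - k)⟩
  | ⟨m, .inr h⟩, ⟨n, .inl k⟩ => ⟨m + n, .inl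
      (by push_cast; linear_combination (norm := module) h + k)⟩
  | ⟨m, .inr h⟩, ⟨n, .inr k⟩ => ⟨m + n, .inr
      (by push_cast; linear_combination (norm := module) h + k)⟩

theorem collin : SeriesRel α β γ → Collin α γ → Collin α β
  | ⟨m, .inl h⟩, ⟨t, ht⟩ => ⟨m - t, by linear_combination (norm := module) h - ht⟩
  | ⟨m, .inr h⟩, ⟨t, ht⟩ => ⟨m + t, by linear_combination (norm := module) h + ht⟩

/-- The equivalence relation whose classes, within the covectors of a configuration that are not
proportional to `α`, are the `α`-series. -/
def setoid (α : Fin N → ℂ) : Setoid (Fin N → ℂ) where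
  r := SeriesRel α
  iseqv := ⟨SeriesRel.refl α, SeriesRel.symm, SeriesRel.trans⟩

end SeriesRel

theorem isTrigVSystem_iff {N : ℕ} {A : Finset (Fin N → ℂ)} {c : (Fin N → ℂ) → ℂ}
    {dual : (Fin N → ℂ) → Fin N → ℂ} :
    IsTrigVSystem A c dual ↔ ∀ α ∈ A, ∀ γ ∈ A, ∀ a b : Fin N → ℂ,
      ∑ β ∈ A with SeriesRel α β γ, c β * ev α (dual β) * wedge α β a b = 0 := by
  constructor
  · intro hA α hα γ hγ a b
    by_cases hαγ : Collin α γ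
    · exact sum_eq_zero fun β hβ => by
        rw [((mem_filter.1 hβ).2.collin hαγ).wedge_eq_zero, mul_zero]
    refine hA α hα _ ⟨⟨γ, mem_filter.2 ⟨hγ, .refl α γ⟩⟩, fun β hβ => ?_, fun β hβ δ hδ => ?_,
      fun β hβA _ ⟨δ, hδ, hβδ⟩ => ?_⟩ a b
    · exact ⟨(mem_filter.1 hβ).1, fun h => hαγ ((mem_filter.1 hβ).2.symm.collin h)⟩
    · exact (mem_filter.1 hβ).2.trans (mem_filter.1 hδ).2.symm
    · exact mem_filter.2 ⟨hβA, hβδ.trans (mem_filter.1 hδ).2⟩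
  · rintro hA α hα Γ ⟨⟨γ, hγ⟩, hmem, hrel, hmax⟩ a b
    have hΓ : Γ = A.filter (SeriesRel α · γ) := by
      ext β
      refine ⟨fun hβ => mem_filter.2 ⟨(hmem β hβ).1, hrel β hβ γ hγ⟩, fun hβ => ?_⟩
      obtain ⟨hβA, hβγ⟩ := mem_filter.1 hβ
      exact hmax β hβA (fun h => (hmem γ hγ).2 (hβγ.symm.collin h)) ⟨γ, hγ, hβγ⟩
    rw [hΓ]
    exact hA α hα γ (hmem γ hγ).1 a b

theorem ccot_periodic : Function.Periodic ccot Real.pi :=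
  Complex.cos_antiperiodic.div Complex.sin_antiperiodic

theorem ccot_neg (z : ℂ) : ccot (-z) = -ccot z := by
  rw [ccot, ccot, Complex.cos_neg, Complex.sin_neg, div_neg]

theorem SeriesRel.wedge_mul_ccot {N : ℕ} {α β γ : Fin N → ℂ} (h : SeriesRel α β γ)
    {x : Fin N → ℂ} (hx : Complex.sin (ev α x) = 0) (u v : Fin N → ℂ) :
    wedge α β u v * ccot (ev β x) = wedge α γ u v * ccot (ev γ x) := by
  obtain ⟨k, hk⟩ := Complex.sin_eq_zero_iff.1 hx
  obtain ⟨m, h | h⟩ := h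
  · obtain rfl : β = (m : ℂ) • α - γ := eq_sub_of_add_eq h
    have hcot : ccot (m * ev α x - ev γ x) = -ccot (ev γ x) := by
      rw [hk, ← mul_assoc, ← Int.cast_mul, ccot_periodic.int_mul_sub_eq, ccot_neg]
    simp only [wedge, ev_sub_left, ev_smul_left, hcot]
    ring
  · obtain rfl : β = (m : ℂ) • α + γ := eq_add_of_sub_eq h
    have hcot : ccot (m * ev α x + ev γ x) = ccot (ev γ x) := by
      rw [hk, ← mul_assoc, ← Int.cast_mul, add_comm, ccot_periodic.int_mul]
    simp only [wedge, ev_add_left, ev_smul_left, hcot]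
    ring

/-- The factor `wedge α β u v * ccot (ev β x)` is constant along each `α`-series, so that the
∨-conditions apply series by series. -/
theorem IsTrigVSystem.sum_mul_ccot_eq_zero {N : ℕ} {A : Finset (Fin N → ℂ)}
    {c : (Fin N → ℂ) → ℂ} {dual : (Fin N → ℂ) → Fin N → ℂ} (hA : IsTrigVSystem A c dual)
    {α : Fin N → ℂ} (hα : α ∈ A) {x : Fin N → ℂ} (hx : Complex.sin (ev α x) = 0)
    (a b u v : Fin N → ℂ) :
    ∑ β ∈ A, c β * ev α (dual β) * wedge α β a b * (wedge α β u v * ccot (ev β x)) = 0 := by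
  refine sum_cancels_of_partition_cancels (SeriesRel.setoid α) fun γ hγ => ?_
  calc ∑ β ∈ A with SeriesRel α β γ,
        c β * ev α (dual β) * wedge α β a b * (wedge α β u v * ccot (ev β x))
      = (∑ β ∈ A with SeriesRel α β γ, c β * ev α (dual β) * wedge α β a b) *
          (wedge α γ u v * ccot (ev γ x)) := by
        rw [sum_mul]
        exact sum_congr rfl fun β hβ => by rw [(mem_filter.1 hβ).2.wedge_mul_ccot hx]
    _ = 0 := by rw [isTrigVSystem_iff.1 hA α hα γ hγ a b, zero_mul]

/-! ### Cotangents along a line -/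

section CotPolynomial
open Polynomial

/-- Numerator of `-i cot (θ + n t)` as a rational function of `z = exp (2it)`. -/
def cotNum (n : ℕ) (θ : ℂ) : ℂ[X] := X ^ n + C (Complex.exp (-(2 * Complex.I * θ)))

/-- Denominator of `-i cot (θ + n t)` as a rational function of `z = exp (2it)`. -/
def cotDen (n : ℕ) (θ : ℂ) : ℂ[X] := X ^ n - C (Complex.exp (-(2 * Complex.I * θ)))

theorem natDegree_cotNum (n : ℕ) (θ : ℂ) : (cotNum n θ).natDegree = n := natDegree_X_pow_add_C

theorem natDegree_cotDen (n : ℕ) (θ : ℂ) : (cotDen n θ).natDegree = n := natDegree_X_pow_sub_C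

theorem separable_cotDen {n : ℕ} (hn : 0 < n) (θ : ℂ) : (cotDen n θ).Separable :=
  separable_X_pow_sub_C _ (Nat.cast_ne_zero.2 hn.ne') (Complex.exp_ne_zero _)

theorem cotNum_div_cotDen_eval_zero {n : ℕ} (hn : 0 < n) (θ : ℂ) :
    (cotNum n θ).eval 0 / (cotDen n θ).eval 0 = -1 := by
  simp only [cotNum, cotDen, eval_add, eval_sub, eval_pow, eval_X, eval_C, zero_pow hn.ne',
    zero_add, zero_sub, div_neg, div_self (Complex.exp_ne_zero _)]

theorem ccot_add_nat_mul (n : ℕ) (θ t : ℂ) :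
    ccot (θ + n * t) = Complex.I * ((cotNum n θ).eval (Complex.exp (2 * Complex.I * t)) /
      (cotDen n θ).eval (Complex.exp (2 * Complex.I * t))) := by
  simp only [cotNum, cotDen, eval_add, eval_sub, eval_pow, eval_X, eval_C]
  set z := Complex.exp (2 * Complex.I * t)
  set w := Complex.exp (2 * Complex.I * θ) with hw
  have hw0 : w ≠ 0 := Complex.exp_ne_zero _
  have hexp : Complex.exp (2 * Complex.I * (θ + n * t)) = w * z ^ n := by
    rw [hw, ← Complex.exp_nat_mul, ← Complex.exp_add]
    ring_nf
  have hcot : ccot (θ + n * t) = (w * z ^ n + 1) / (Complex.I * (1 - w * z ^ n)) := by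
    rw [← hexp]
    exact Complex.cot_eq_exp_ratio _
  have hnum : z ^ n + w⁻¹ = w⁻¹ * (w * z ^ n + 1) := by field_simp
  have hden : z ^ n - w⁻¹ = w⁻¹ * -(1 - w * z ^ n) := by field_simp; ring
  rw [Complex.exp_neg, hcot, hnum, hden, mul_div_mul_left _ _ (inv_ne_zero hw0), div_neg,
    div_mul_eq_div_div_swap, Complex.div_I]
  ring

theorem sin_eq_zero_of_isRoot_cotDen {n : ℕ} {θ t : ℂ}
    (h : (cotDen n θ).IsRoot (Complex.exp (2 * Complex.I * t))) :
    Complex.sin (θ + n * t) = 0 := by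
  rw [IsRoot, cotDen, eval_sub, eval_pow, eval_X, eval_C, sub_eq_zero, ← Complex.exp_nat_mul,
    Complex.exp_eq_exp_iff_exists_int] at h
  obtain ⟨k, hk⟩ := h
  refine Complex.sin_eq_zero_iff.2 ⟨k, ?_⟩
  apply mul_left_cancel₀ (mul_ne_zero two_ne_zero Complex.I_ne_zero)
  linear_combination hk

theorem exists_exp_eq_of_isRoot_cotDen {n : ℕ} (hn : 0 < n) {θ z : ℂ}
    (hz : (cotDen n θ).IsRoot z) : ∃ t, Complex.exp (2 * Complex.I * t) = z := by
  have hz0 : z ≠ 0 := by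
    rintro rfl
    rw [IsRoot, cotDen, eval_sub, eval_pow, eval_X, eval_C, zero_pow hn.ne', zero_sub,
      neg_eq_zero] at hz
    exact Complex.exp_ne_zero _ hz
  exact ⟨Complex.log z / (2 * Complex.I), by
    rw [mul_div_cancel₀ _ (mul_ne_zero two_ne_zero Complex.I_ne_zero), Complex.exp_log hz0]⟩

theorem sin_mul_sub_mul_eq_zero_of_isRoot_cotDen {m n : ℕ} (hm : 0 < m) {θ φ z : ℂ}
    (hθ : (cotDen m θ).IsRoot z) (hφ : (cotDen n φ).IsRoot z) :
    Complex.sin (n * θ - m * φ) = 0 := by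
  obtain ⟨t, rfl⟩ := exists_exp_eq_of_isRoot_cotDen hm hθ
  obtain ⟨k, hk⟩ := Complex.sin_eq_zero_iff.1 (sin_eq_zero_of_isRoot_cotDen hθ)
  obtain ⟨l, hl⟩ := Complex.sin_eq_zero_iff.1 (sin_eq_zero_of_isRoot_cotDen hφ)
  refine Complex.sin_eq_zero_iff.2 ⟨n * k - m * l, ?_⟩
  push_cast
  linear_combination (n : ℂ) * hk - (m : ℂ) * hl

end CotPolynomial

/-- The weight of the pair `α`, `β` in the sums that make up the commutators
`F_i F_{N+1}⁻¹ F_j - F_j F_{N+1}⁻¹ F_i`: the pairing of `α` with `β` times the value of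
`(α ∧ β) ⊗ (α ∧ β)` at `(a, b)` and `(u, v)`. -/
def pairCoeff {N : ℕ} (A : Finset (Fin N → ℂ)) (c : (Fin N → ℂ) → ℂ)
    (dual : (Fin N → ℂ) → Fin N → ℂ) (a b u v α β : Fin N → ℂ) : ℂ :=
  c α * c β * Gform A c (dual α) (dual β) * (wedge α β a b * wedge α β u v)

section PairCoeff

variable {N : ℕ} {A : Finset (Fin N → ℂ)} {c : (Fin N → ℂ) → ℂ}
  {dual : (Fin N → ℂ) → Fin N → ℂ} {ξ x : Fin N → ℂ} (a b u v α β : Fin N → ℂ)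

theorem Gform_comm (A : Finset (Fin N → ℂ)) (c : (Fin N → ℂ) → ℂ) (u v : Fin N → ℂ) :
    Gform A c u v = Gform A c v u :=
  sum_congr rfl fun _ _ => mul_right_comm _ _ _

theorem pairCoeff_comm : pairCoeff A c dual a b u v α β = pairCoeff A c dual a b u v β α := by
  rw [pairCoeff, pairCoeff, Gform_comm, wedge, wedge, wedge, wedge]
  ring

theorem pairCoeff_self : pairCoeff A c dual a b u v α α = 0 := by
  rw [pairCoeff, wedge, mul_comm (ev α a), sub_self, zero_mul, mul_zero]

variable {α}

theorem IsTrigVSystem.sum_pairCoeff_mul_ccot_eq_zero (hA : IsTrigVSystem A c dual)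
    (hdual : IsDual A c dual) (hα : α ∈ A) (hx : Complex.sin (ev α x) = 0) :
    ∑ β ∈ A, pairCoeff A c dual a b u v α β * ccot (ev β x) = 0 := by
  calc ∑ β ∈ A, pairCoeff A c dual a b u v α β * ccot (ev β x)
      = c α * ∑ β ∈ A,
          c β * ev α (dual β) * wedge α β a b * (wedge α β u v * ccot (ev β x)) := by
        rw [mul_sum]
        refine sum_congr rfl fun β _ => ?_
        rw [pairCoeff, hdual α hα]
        ring
    _ = 0 := by rw [hA.sum_mul_ccot_eq_zero hα hx, mul_zero]

/-- The possible poles are simple, and the residues vanish by the ∨-conditions. -/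
theorem IsTrigVSystem.exists_sum_pairCoeff_mul_cot_eq_const (hA : IsTrigVSystem A c dual)
    (hdual : IsDual A c dual) {n : (Fin N → ℂ) → ℕ} (hn : ∀ α ∈ A, 0 < n α)
    (hξ : ∀ α ∈ A, ev α ξ = n α)
    (hgen : ∀ α ∈ A, ∀ β ∈ A, α ≠ β → Complex.sin (wedge α β x ξ) ≠ 0) :
    ∃ k, ∀ z, (∀ α ∈ A, (cotDen (n α) (ev α x)).eval z ≠ 0) →
      ∑ α ∈ A, ∑ β ∈ A, pairCoeff A c dual a b u v α β *
        ((cotNum (n α) (ev α x)).eval z / (cotDen (n α) (ev α x)).eval z *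
          ((cotNum (n β) (ev β x)).eval z / (cotDen (n β) (ev β x)).eval z)) = k := by
  refine exists_sum_mul_div_eq_const
    (pairCoeff_comm (A := A) (c := c) (dual := dual) a b u v) (pairCoeff_self a b u v)
    (fun α _ => by rw [natDegree_cotNum, natDegree_cotDen])
    (fun α hα => separable_cotDen (hn α hα) _)
    (fun α hα β hβ hαβ z hzα hzβ => hgen α hα β hβ hαβ ?_) (fun α hα z hz => ?_)
  · rw [wedge, hξ α hα, hξ β hβ, mul_comm (ev α x)]
    exact sin_mul_sub_mul_eq_zero_of_isRoot_cotDen (hn α hα) hzα hzβ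
  · obtain ⟨t, rfl⟩ := exists_exp_eq_of_isRoot_cotDen (hn α hα) hz
    have hline : ∀ β ∈ A, ev β (x + t • ξ) = ev β x + n β * t := fun β hβ => by
      rw [ev_add_right, ev_smul_right, hξ β hβ, mul_comm t]
    have hsin : Complex.sin (ev α (x + t • ξ)) = 0 := by
      rw [hline α hα]
      exact sin_eq_zero_of_isRoot_cotDen hz
    have hsum := hA.sum_pairCoeff_mul_ccot_eq_zero a b u v hdual hα hsin
    rw [sum_congr rfl fun β hβ => by rw [hline β hβ, ccot_add_nat_mul, mul_left_comm],
      ← mul_sum] at hsum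
    exact (mul_eq_zero.1 hsum).resolve_left Complex.I_ne_zero

/-- The two sides are the values at `t = 0` and `t = i∞` of a function that is constant along the
line `x + t ξ`. -/
theorem IsTrigVSystem.sum_pairCoeff_mul_ccot_mul_ccot_of_generic (hA : IsTrigVSystem A c dual)
    (hdual : IsDual A c dual) (hξ : ∀ α ∈ A, ∃ n : ℕ, 0 < n ∧ ev α ξ = n)
    (hx : ∀ α ∈ A, Complex.sin (ev α x) ≠ 0)
    (hgen : ∀ α ∈ A, ∀ β ∈ A, α ≠ β → Complex.sin (wedge α β x ξ) ≠ 0) :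
    ∑ α ∈ A, ∑ β ∈ A, pairCoeff A c dual a b u v α β * (ccot (ev α x) * ccot (ev β x)) =
      -∑ α ∈ A, ∑ β ∈ A, pairCoeff A c dual a b u v α β := by
  choose! n hn hnξ using hξ
  obtain ⟨k, hk⟩ := hA.exists_sum_pairCoeff_mul_cot_eq_const a b u v hdual hn hnξ hgen
  have hcot : ∀ α ∈ A, ccot (ev α x) =
      Complex.I * ((cotNum (n α) (ev α x)).eval 1 / (cotDen (n α) (ev α x)).eval 1) :=
    fun α _ => by simpa using ccot_add_nat_mul (n α) (ev α x) 0
  have hk0 := hk 0 fun α hα h0 => by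
    simpa [h0] using cotNum_div_cotDen_eval_zero (hn α hα) (ev α x)
  have hk1 := hk 1 fun α hα h1 => hx α hα <| by
    simpa using sin_eq_zero_of_isRoot_cotDen (n := n α) (θ := ev α x) (t := 0) (by simpa using h1)
  calc ∑ α ∈ A, ∑ β ∈ A, pairCoeff A c dual a b u v α β * (ccot (ev α x) * ccot (ev β x))
      = -k := by
        simp only [← hk1, ← sum_neg_distrib]
        refine sum_congr rfl fun α hα => sum_congr rfl fun β hβ => ?_
        rw [hcot α hα, hcot β hβ, mul_mul_mul_comm, Complex.I_mul_I, neg_one_mul, mul_neg]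
    _ = -∑ α ∈ A, ∑ β ∈ A, pairCoeff A c dual a b u v α β := by
        rw [← hk0]
        congr 1
        refine sum_congr rfl fun α hα => sum_congr rfl fun β hβ => ?_
        rw [cotNum_div_cotDen_eval_zero (hn α hα), cotNum_div_cotDen_eval_zero (hn β hβ),
          neg_mul_neg, one_mul, mul_one]

end PairCoeff

section Density
open Filter Topology

theorem eventually_sin_add_mul_ne_zero (a : ℂ) {b : ℂ} (hb : b ≠ 0) :
    ∀ᶠ τ in 𝓝[≠] (0 : ℂ), Complex.sin (a + τ * b) ≠ 0 := by
  have hderiv : HasDerivAt (fun τ => Complex.sin (a + τ * b)) (Complex.cos a * b) 0 := by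
    simpa using (((hasDerivAt_id (0 : ℂ)).mul_const b).const_add a).csin
  by_cases ha : Complex.sin a = 0
  · refine hderiv.eventually_ne (mul_ne_zero (fun hcos => ?_) hb)
    simpa [ha, hcos] using Complex.sin_sq_add_cos_sq a
  · refine (hderiv.continuousAt.eventually_ne ?_).filter_mono nhdsWithin_le_nhds
    simpa using ha

variable {N : ℕ} {A : Finset (Fin N → ℂ)} {c : (Fin N → ℂ) → ℂ}
  {dual : (Fin N → ℂ) → Fin N → ℂ} {ξ x : Fin N → ℂ}

theorem exists_wedge_ne_zero {α β : Fin N → ℂ} (hξ : ev α ξ ≠ 0) (hαβ : ¬ Collin α β) :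
    ∃ v, wedge α β v ξ ≠ 0 := by
  by_contra! h
  refine hαβ ⟨ev β ξ / ev α ξ, funext fun i => ?_⟩
  have hi := h (Pi.single i 1)
  rw [wedge, ev_single, ev_single] at hi
  rw [Pi.smul_apply, smul_eq_mul]
  field_simp
  linear_combination -hi

/-- The functional `v ↦ (α ∧ β)(v, ξ)`. -/
def wedgeLeft (ξ α β : Fin N → ℂ) : Module.Dual ℂ (Fin N → ℂ) where
  toFun v := wedge α β v ξ
  map_add' u v := by simp only [wedge, ev_add_right]; ring
  map_smul' t v := by simp only [wedge, ev_smul_right, smul_eq_mul, RingHom.id_apply]; ring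

theorem exists_forall_wedge_ne_zero (hξ : ∀ α ∈ A, ev α ξ ≠ 0)
    (hred : ∀ α ∈ A, ∀ β ∈ A, Collin α β → β = α) :
    ∃ v, ∀ α ∈ A, ∀ β ∈ A, α ≠ β → wedge α β v ξ ≠ 0 := by
  obtain ⟨v, hv⟩ := Module.Dual.exists_forall_ne_zero_of_forall_exists
    (fun p : {p : A × A // p.1 ≠ p.2} => wedgeLeft ξ p.1.1 p.1.2) fun p =>
      exists_wedge_ne_zero (hξ _ p.1.1.2) fun h =>
        p.2 (Subtype.ext (hred _ p.1.1.2 _ p.1.2.2 h).symm)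
  exact ⟨v, fun α hα β hβ hαβ => hv ⟨(⟨α, hα⟩, ⟨β, hβ⟩), fun h => hαβ (congrArg Subtype.val h)⟩⟩

theorem continuousAt_ccot {z : ℂ} (hz : Complex.sin z ≠ 0) : ContinuousAt ccot z :=
  Complex.continuous_cos.continuousAt.div Complex.continuous_sin.continuousAt hz

theorem continuous_ev (α : Fin N → ℂ) : Continuous (ev α) := by
  unfold ev
  fun_prop

theorem IsTrigVSystem.sum_pairCoeff_mul_ccot_mul_ccot (hA : IsTrigVSystem A c dual)
    (hdual : IsDual A c dual) (hξ : ∀ α ∈ A, ∃ n : ℕ, 0 < n ∧ ev α ξ = n)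
    (hred : ∀ α ∈ A, ∀ β ∈ A, Collin α β → β = α)
    (hx : ∀ α ∈ A, Complex.sin (ev α x) ≠ 0) (a b u v : Fin N → ℂ) :
    ∑ α ∈ A, ∑ β ∈ A, pairCoeff A c dual a b u v α β * (ccot (ev α x) * ccot (ev β x)) =
      -∑ α ∈ A, ∑ β ∈ A, pairCoeff A c dual a b u v α β := by
  have hξ0 : ∀ α ∈ A, ev α ξ ≠ 0 := fun α hα => by
    obtain ⟨n, hn, h⟩ := hξ α hα
    rw [h]
    exact Nat.cast_ne_zero.2 hn.ne'
  obtain ⟨w, hw⟩ := exists_forall_wedge_ne_zero hξ0 hred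
  set f : (Fin N → ℂ) → ℂ := fun y =>
    ∑ α ∈ A, ∑ β ∈ A, pairCoeff A c dual a b u v α β * (ccot (ev α y) * ccot (ev β y))
  have hcot : ∀ α ∈ A, ContinuousAt (fun y => ccot (ev α y)) x := fun α hα =>
    (continuousAt_ccot (hx α hα)).comp (continuous_ev α).continuousAt
  have hf : ContinuousAt f x := tendsto_finsetSum _ fun α hα => tendsto_finsetSum _ fun β hβ =>
    ((hcot α hα).mul (hcot β hβ)).const_mul _
  have hline : Tendsto (fun τ : ℂ => x + τ • w) (𝓝[≠] 0) (𝓝 x) := by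
    have : Continuous fun τ : ℂ => x + τ • w := by fun_prop
    simpa using (this.tendsto 0).mono_left nhdsWithin_le_nhds
  have hsin : ∀ᶠ τ in 𝓝[≠] (0 : ℂ), ∀ α ∈ A, Complex.sin (ev α (x + τ • w)) ≠ 0 :=
    hline.eventually <| (Filter.eventually_all_finset A).2 fun α hα =>
      ((Complex.continuous_sin.comp (continuous_ev α)).continuousAt).eventually_ne (hx α hα)
  have hgen : ∀ᶠ τ in 𝓝[≠] (0 : ℂ), ∀ α ∈ A, ∀ β ∈ A, α ≠ β →
      Complex.sin (wedge α β (x + τ • w) ξ) ≠ 0 :=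
    (Filter.eventually_all_finset A).2 fun α hα => (Filter.eventually_all_finset A).2
      fun β hβ => Filter.eventually_imp_distrib_left.2 fun hαβ => by
        filter_upwards [eventually_sin_add_mul_ne_zero (wedge α β x ξ) (hw α hα β hβ hαβ)] with τ h
        convert h using 2
        simp only [wedge, ev_add_right, ev_smul_right]
        ring
  refine tendsto_nhds_unique ((hf.tendsto.comp hline).congr' ?_) tendsto_const_nhds
  filter_upwards [hsin, hgen] with τ hτ hτgen
  exact hA.sum_pairCoeff_mul_ccot_mul_ccot_of_generic a b u v hdual hξ hτ hτgen

end Density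

/-! ### Reduction of the WDVV equations to a quadratic identity -/

section Polarization

variable {N : ℕ} {A : Finset (Fin N → ℂ)} {c : (Fin N → ℂ) → ℂ}
  {dual : (Fin N → ℂ) → Fin N → ℂ}

theorem sum_mul_wedge_mul_wedge {ω : (Fin N → ℂ) → (Fin N → ℂ) → ℂ}
    (hω : ∀ α β, ω α β = ω β α) (a b u v : Fin N → ℂ) :
    ∑ α ∈ A, ∑ β ∈ A, ω α β * (wedge α β a b * wedge α β u v) =
      2 * (∑ α ∈ A, ∑ β ∈ A, ω α β * (ev α a * ev α u * (ev β b * ev β v)) -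
        ∑ α ∈ A, ∑ β ∈ A, ω α β * (ev α b * ev α u * (ev β a * ev β v))) := by
  have hswap := sum_comm (s := A) (t := A) (f := fun α β =>
    ω α β * (ev α a * ev α u * (ev β b * ev β v)) - ω α β * (ev α b * ev α u * (ev β a * ev β v)))
  rw [two_mul]
  simp only [← sum_sub_distrib]
  nth_rw 2 [hswap]
  simp only [← sum_add_distrib, wedge]
  refine sum_congr rfl fun α _ => sum_congr rfl fun β _ => ?_
  rw [hω β α]
  ring

/-- Polarise in each slot separately; the remaining ambiguity is removed by the Plücker relation
for `α ∧ β`, exactly as a curvature tensor is recovered from its sectional curvatures. -/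
theorem sum_mul_wedge_mul_wedge_eq_zero {ω : (Fin N → ℂ) → (Fin N → ℂ) → ℂ}
    (h : ∀ u v, ∑ α ∈ A, ∑ β ∈ A, ω α β * wedge α β u v ^ 2 = 0) (a b u v : Fin N → ℂ) :
    ∑ α ∈ A, ∑ β ∈ A, ω α β * (wedge α β a b * wedge α β u v) = 0 := by
  set S : (Fin N → ℂ) → (Fin N → ℂ) → (Fin N → ℂ) → (Fin N → ℂ) → ℂ := fun a b u v =>
    ∑ α ∈ A, ∑ β ∈ A, ω α β * (wedge α β a b * wedge α β u v) with hS
  replace h : ∀ u v, S u v u v = 0 := fun u v => by simpa only [hS, ← pow_two] using h u v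
  have hright : ∀ a b v, S a b a v = 0 := fun a b v => by
    have hexp : S a (b + v) a (b + v) = S a b a b + 2 * S a b a v + S a v a v := by
      simp only [hS, mul_sum, ← sum_add_distrib, wedge, ev_add_right]
      exact sum_congr rfl fun α _ => sum_congr rfl fun β _ => by ring
    rw [h, h, h, zero_add, add_zero] at hexp
    exact (mul_eq_zero.1 hexp.symm).resolve_left two_ne_zero
  have hleft : ∀ a b u v, S a b u v + S u b a v = 0 := fun a b u v => by
    have hexp : S (a + u) b (a + u) v = S a b a v + (S a b u v + S u b a v) + S u b u v := by
      simp only [hS, ← sum_add_distrib, wedge, ev_add_right]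
      exact sum_congr rfl fun α _ => sum_congr rfl fun β _ => by ring
    rwa [hright, hright, hright, zero_add, add_zero, eq_comm] at hexp
  have hplucker : S a b u v + S b u a v + S u a b v = 0 := by
    simp only [hS, ← sum_add_distrib, wedge]
    exact sum_eq_zero fun α _ => sum_eq_zero fun β _ => by ring
  have hswap : ∀ a b u v, S a b u v = -S b a u v := fun a b u v => by
    simp only [hS, ← sum_neg_distrib, wedge]
    exact sum_congr rfl fun α _ => sum_congr rfl fun β _ => by ring
  linear_combination (hplucker + hleft a b u v - hswap u b a v - hleft b a u v
    + hswap a b u v) / 3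

theorem sum_pairCoeff_eq_of_G2form_eq {lam : ℂ}
    (h : ∀ u v, lam ^ 2 * G2form A c dual u v = 4 * G1form A c u v) (a b u v : Fin N → ℂ) :
    lam ^ 2 * ∑ α ∈ A, ∑ β ∈ A, pairCoeff A c dual a b u v α β =
      4 * ∑ α ∈ A, ∑ β ∈ A, c α * c β * (wedge α β a b * wedge α β u v) := by
  rw [← sub_eq_zero]
  have hω := sum_mul_wedge_mul_wedge_eq_zero (A := A)
    (ω := fun α β => c α * c β * (lam ^ 2 * Gform A c (dual α) (dual β) - 4)) (fun u v => by
      rw [← sub_eq_zero.2 (h u v)]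
      simp only [G2form, G1form, mul_sum, ← sum_sub_distrib]
      exact sum_congr rfl fun α _ => sum_congr rfl fun β _ => by ring) a b u v
  rw [← hω]
  simp only [pairCoeff, mul_sum, ← sum_sub_distrib]
  exact sum_congr rfl fun α _ => sum_congr rfl fun β _ => by ring

end Polarization

section Matrices
open Matrix

variable {N : ℕ} {A : Finset (Fin N → ℂ)} {c : (Fin N → ℂ) → ℂ}
  {dual : (Fin N → ℂ) → Fin N → ℂ}

/-- The matrix of the bilinear form `Gform A c`. -/
def gramMatrix (A : Finset (Fin N → ℂ)) (c : (Fin N → ℂ) → ℂ) : Matrix (Fin N) (Fin N) ℂ :=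
  ∑ α ∈ A, c α • vecMulVec α α

/-- The matrix `∑ α, c α * t α * α i • α ⊗ α`; with `t α = cot α(x)` it is, up to `λ`, the upper
left block of `Fmat`. -/
def cubicMatrix (A : Finset (Fin N → ℂ)) (c t : (Fin N → ℂ) → ℂ) (i : Fin N) :
    Matrix (Fin N) (Fin N) ℂ :=
  ∑ α ∈ A, (c α * t α * α i) • vecMulVec α α

theorem gramMatrix_apply (p q : Fin N) : gramMatrix A c p q = ∑ α ∈ A, c α * (α p * α q) := by
  simp only [gramMatrix, Matrix.sum_apply, Matrix.smul_apply, vecMulVec_apply, smul_eq_mul]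

theorem isSymm_gramMatrix : (gramMatrix A c).IsSymm :=
  Matrix.ext fun p q => by simp only [transpose_apply, gramMatrix_apply, mul_comm (_ : ℂ) (_ : ℂ)]

theorem dotProduct_gramMatrix_mulVec (u v : Fin N → ℂ) :
    u ⬝ᵥ gramMatrix A c *ᵥ v = Gform A c u v := by
  simp only [gramMatrix, sum_mulVec, dotProduct_sum, smul_mulVec, vecMulVec_mulVec,
    dotProduct_smul, Gform, ev, smul_eq_mul, op_smul_eq_smul]
  refine sum_congr rfl fun α _ => ?_
  rw [dotProduct_comm u α, mul_comm (α ⬝ᵥ v), ← mul_assoc]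
  rfl

theorem Nondeg.isUnit_det_gramMatrix (h : Nondeg A c) : IsUnit (gramMatrix A c).det := by
  rw [isUnit_iff_ne_zero]
  intro hdet
  obtain ⟨v, hv, hGv⟩ := exists_mulVec_eq_zero_iff.2 hdet
  refine hv (h v fun w => ?_)
  rw [Gform_comm, ← dotProduct_gramMatrix_mulVec, hGv, dotProduct_zero]

theorem IsDual.gramMatrix_inv_mulVec (hdual : IsDual A c dual) (h : Nondeg A c)
    {α : Fin N → ℂ} (hα : α ∈ A) : (gramMatrix A c)⁻¹ *ᵥ α = dual α := by
  have hmul : gramMatrix A c *ᵥ dual α = α := by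
    ext i
    rw [← ev_single α i, ← hdual α hα, Gform_comm, ← dotProduct_gramMatrix_mulVec,
      single_one_dotProduct]
  conv_lhs => rw [← hmul]
  rw [mulVec_mulVec, nonsing_inv_mul _ h.isUnit_det_gramMatrix, one_mulVec]

theorem cubicMatrix_apply (t : (Fin N → ℂ) → ℂ) (i p q : Fin N) :
    cubicMatrix A c t i p q = ∑ α ∈ A, c α * t α * α i * (α p * α q) := by
  simp only [cubicMatrix, Matrix.sum_apply, Matrix.smul_apply, vecMulVec_apply, smul_eq_mul]

theorem cubicMatrix_comm_left (t : (Fin N → ℂ) → ℂ) (i p q : Fin N) :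
    cubicMatrix A c t i p q = cubicMatrix A c t p i q := by
  simp only [cubicMatrix_apply]
  exact sum_congr rfl fun α _ => by ring

theorem cubicMatrix_comm_right (t : (Fin N → ℂ) → ℂ) (i p q : Fin N) :
    cubicMatrix A c t i p q = cubicMatrix A c t i q p := by
  simp only [cubicMatrix_apply, mul_comm (_ : ℂ) (_ : ℂ)]

theorem cubicMatrix_mul_gramMatrix_inv_mul (hdual : IsDual A c dual) (h : Nondeg A c)
    (t : (Fin N → ℂ) → ℂ) (i j p q : Fin N) :
    (cubicMatrix A c t i * (gramMatrix A c)⁻¹ * cubicMatrix A c t j) p q =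
      ∑ α ∈ A, ∑ β ∈ A, c α * c β * Gform A c (dual α) (dual β) * (t α * t β) *
        (α i * α p * (β j * β q)) := by
  simp only [cubicMatrix, Matrix.sum_mul, Matrix.mul_sum, Matrix.sum_apply]
  rw [sum_comm]
  refine sum_congr rfl fun α hα => sum_congr rfl fun β hβ => ?_
  have hK : α ⬝ᵥ dual β = Gform A c (dual α) (dual β) := (hdual α hα _).symm
  rw [Matrix.smul_mul, Matrix.smul_mul, Matrix.mul_smul, Matrix.mul_assoc, mul_vecMulVec,
    hdual.gramMatrix_inv_mulVec h hβ, vecMulVec_mul_vecMulVec, hK]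
  simp only [Matrix.smul_apply, vecMulVec_apply, Pi.smul_apply, smul_eq_mul]
  ring

theorem Flast_eq_fromBlocks :
    Flast A c = fromBlocks ((2 : ℂ) • gramMatrix A c) 0 0 ((2 : ℂ) • 1) := by
  ext (p | p) (q | q) <;> simp [Flast, gramMatrix_apply, mul_assoc]

theorem Fmat_eq_fromBlocks (lam : ℂ) (i : Fin N) (x : Fin N → ℂ) :
    Fmat A c lam i x = fromBlocks (lam • cubicMatrix A c (fun α => ccot (ev α x)) i)
      ((2 : ℂ) • replicateCol Unit (gramMatrix A c i))
      ((2 : ℂ) • replicateRow Unit (gramMatrix A c i)) 0 := by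
  ext (p | p) (q | q)
  · simp only [Fmat, of_apply, fromBlocks_apply₁₁, Matrix.smul_apply, smul_eq_mul,
      cubicMatrix_apply]
    congr 1
    exact sum_congr rfl fun α _ => by ring
  all_goals simp [Fmat, gramMatrix_apply, mul_assoc]

theorem Flast_mul_fromBlocks (h : Nondeg A c) :
    Flast A c * fromBlocks ((2⁻¹ : ℂ) • (gramMatrix A c)⁻¹) 0 0 ((2⁻¹ : ℂ) • 1) = 1 := by
  rw [Flast_eq_fromBlocks, fromBlocks_multiply]
  simp [mul_nonsing_inv _ h.isUnit_det_gramMatrix, fromBlocks_one]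

theorem Fmat_mul_Flast_inv_mul_Fmat (h : Nondeg A c) (lam : ℂ) (i j : Fin N) (x : Fin N → ℂ) :
    Fmat A c lam i x * (Flast A c)⁻¹ * Fmat A c lam j x =
      let C := cubicMatrix A c fun α => ccot (ev α x)
      fromBlocks ((lam ^ 2 / 2) • (C i * (gramMatrix A c)⁻¹ * C j) +
          (2 : ℂ) • vecMulVec (gramMatrix A c i) (gramMatrix A c j))
        (lam • replicateCol Unit (C i j)) (lam • replicateRow Unit (C j i))
        (of fun _ _ => 2 * gramMatrix A c i j) := by
  have hdet := h.isUnit_det_gramMatrix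
  have hrow : ∀ k, gramMatrix A c k ᵥ* (gramMatrix A c)⁻¹ = Pi.single k 1 := fun k => by
    rw [← mul_apply_eq_vecMul, mul_nonsing_inv _ hdet]
    exact funext fun _ => Matrix.one_apply.trans (by simp [Pi.single_apply, eq_comm])
  have hcol : ∀ k, (gramMatrix A c)⁻¹ *ᵥ gramMatrix A c k = Pi.single k 1 := fun k => by
    rw [← vecMul_transpose, transpose_nonsing_inv, isSymm_gramMatrix.eq, hrow]
  rw [inv_eq_right_inv (Flast_mul_fromBlocks h), Fmat_eq_fromBlocks, Fmat_eq_fromBlocks,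
    fromBlocks_multiply, fromBlocks_multiply]
  simp only [Matrix.mul_zero, Matrix.zero_mul, add_zero, zero_add, Matrix.smul_mul, smul_zero,
    Matrix.mul_smul, Matrix.mul_one, smul_smul, ← replicateRow_vecMul, ← replicateCol_mulVec,
    smul_mulVec, ← mulVec_mulVec, hrow, hcol, vecMulVec_eq Unit]
  congr 1
  · congr 2 <;> ring
  · ext p u
    simp only [Matrix.smul_apply, replicateCol_apply, Pi.smul_apply, mulVec_single_one, col_apply,
      smul_eq_mul, cubicMatrix_comm_right _ i p j]
    ring
  · ext u p
    simp
  · ext u v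
    simp [mulVec, isSymm_gramMatrix.apply i j]

theorem gramMatrix_apply_mul_gramMatrix_apply (i p j q : Fin N) :
    gramMatrix A c i p * gramMatrix A c j q =
      ∑ α ∈ A, ∑ β ∈ A, c α * c β * (α i * α p * (β j * β q)) := by
  rw [gramMatrix_apply, gramMatrix_apply, sum_mul_sum]
  exact sum_congr rfl fun α _ => sum_congr rfl fun β _ => mul_mul_mul_comm _ _ _ _

/-- In the commutator the trigonometric quadratic form collapses to the constant `-∑ pairCoeff`,
which the relation between `G2form` and `G1form` balances against the Gram matrix terms. -/
theorem IsTrigVSystem.cubicMatrix_mul_inv_mul_add (hA : IsTrigVSystem A c dual)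
    (hdual : IsDual A c dual) (hnd : Nondeg A c) {ξ : Fin N → ℂ}
    (hξ : ∀ α ∈ A, ∃ n : ℕ, 0 < n ∧ ev α ξ = n)
    (hred : ∀ α ∈ A, ∀ β ∈ A, Collin α β → β = α) {lam : ℂ}
    (hG : ∀ u v, lam ^ 2 * G2form A c dual u v = 4 * G1form A c u v) {x : Fin N → ℂ}
    (hx : ∀ α ∈ A, Complex.sin (ev α x) ≠ 0) (i j : Fin N) :
    let C := cubicMatrix A c fun α => ccot (ev α x)
    (lam ^ 2 / 2) • (C i * (gramMatrix A c)⁻¹ * C j) +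
        (2 : ℂ) • vecMulVec (gramMatrix A c i) (gramMatrix A c j) =
      (lam ^ 2 / 2) • (C j * (gramMatrix A c)⁻¹ * C i) +
        (2 : ℂ) • vecMulVec (gramMatrix A c j) (gramMatrix A c i) := by
  ext p q
  have hcubic := sum_mul_wedge_mul_wedge (A := A)
    (ω := fun α β => c α * c β * Gform A c (dual α) (dual β) *
      (ccot (ev α x) * ccot (ev β x))) (fun α β => by rw [Gform_comm]; ring)
    (Pi.single i 1) (Pi.single j 1) (Pi.single p 1) (Pi.single q 1)
  have hgram := sum_mul_wedge_mul_wedge (A := A) (ω := fun α β => c α * c β)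
    (fun α β => mul_comm _ _) (Pi.single i 1) (Pi.single j 1) (Pi.single p 1) (Pi.single q 1)
  have hcot := hA.sum_pairCoeff_mul_ccot_mul_ccot hdual hξ hred hx
    (Pi.single i 1) (Pi.single j 1) (Pi.single p 1) (Pi.single q 1)
  have hpair := sum_pairCoeff_eq_of_G2form_eq hG
    (Pi.single i 1) (Pi.single j 1) (Pi.single p 1) (Pi.single q 1)
  simp only [ev_single, ← cubicMatrix_mul_gramMatrix_inv_mul hdual hnd] at hcubic
  simp only [ev_single, ← gramMatrix_apply_mul_gramMatrix_apply] at hgram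
  simp only [pairCoeff, mul_right_comm _ (_ * _) (ccot _ * ccot _)] at hcot
  simp only [pairCoeff] at hpair
  simp only [Matrix.add_apply, Matrix.smul_apply, vecMulVec_apply, smul_eq_mul]
  linear_combination lam ^ 2 / 4 * (hcot - hcubic) + hgram * (-1) - hpair / 4

theorem IsTrigVSystem.satisfiesWDVV (hA : IsTrigVSystem A c dual) (hdual : IsDual A c dual)
    (hnd : Nondeg A c) {ξ : Fin N → ℂ} (hξ : ∀ α ∈ A, ∃ n : ℕ, 0 < n ∧ ev α ξ = n)
    (hred : ∀ α ∈ A, ∀ β ∈ A, Collin α β → β = α) {lam : ℂ}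
    (hG : ∀ u v, lam ^ 2 * G2form A c dual u v = 4 * G1form A c u v) :
    SatisfiesWDVV A c lam := by
  refine ⟨.of_mul_eq_one _ (Flast_mul_fromBlocks hnd), fun x hx i j => ?_⟩
  rw [Fmat_mul_Flast_inv_mul_Fmat hnd, Fmat_mul_Flast_inv_mul_Fmat hnd]
  dsimp only
  congr 1
  · exact hA.cubicMatrix_mul_inv_mul_add hdual hnd hξ hred hG hx i j
  · ext p u
    simp only [Matrix.smul_apply, replicateCol_apply, cubicMatrix_comm_left _ i]
  · ext u p
    simp only [Matrix.smul_apply, replicateRow_apply, cubicMatrix_comm_left _ i]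
  · simp only [isSymm_gramMatrix.apply i j]

end Matrices

/-! ### Configurations with diagonal Gram matrix -/

section DiagonalGram

variable {N : ℕ} {A : Finset (Fin N → ℂ)} {c : (Fin N → ℂ) → ℂ}
  {d d' : (Fin N → ℂ) → Fin N → ℂ}

theorem Nondeg.isDual_unique (h : Nondeg A c) (hd : IsDual A c d) (hd' : IsDual A c d')
    {γ : Fin N → ℂ} (hγ : γ ∈ A) : d γ = d' γ := by
  refine sub_eq_zero.1 (h _ fun v => ?_)
  have hsub : Gform A c (d γ - d' γ) v = Gform A c (d γ) v - Gform A c (d' γ) v := by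
    simp only [← dotProduct_gramMatrix_mulVec, sub_dotProduct]
  rw [hsub, hd γ hγ, hd' γ hγ, sub_self]

theorem IsTrigVSystem.of_isDual (hA : IsTrigVSystem A c d) (h : Nondeg A c) (hd : IsDual A c d)
    (hd' : IsDual A c d') : IsTrigVSystem A c d' := fun α hα Γ hΓ a b => by
  rw [← hA α hα Γ hΓ a b]
  exact sum_congr rfl fun β hβ => by rw [h.isDual_unique hd hd' (hΓ.2.1 β hβ).1]

/-- The cubic form `∑ c_α α ⊗ α ⊗ α` of a configuration. -/
def cubicForm (A : Finset (Fin N → ℂ)) (c : (Fin N → ℂ) → ℂ) (u v w : Fin N → ℂ) : ℂ :=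
  ∑ α ∈ A, c α * (ev α u * ev α v * ev α w)

theorem G1form_eq (u v : Fin N → ℂ) :
    G1form A c u v = 2 * (Gform A c u u * Gform A c v v - Gform A c u v ^ 2) := by
  simp only [G1form, pow_two (wedge _ _ _ _)]
  rw [sum_mul_wedge_mul_wedge fun α β => mul_comm _ _]
  simp only [Gform, pow_two, sum_mul_sum]
  congr 2 <;> exact sum_congr rfl fun α _ => sum_congr rfl fun β _ => by ring

/-- The vectors `γ^∨` when `G_𝒜` is diagonal with entries `g` in the standard basis. -/
def diagDual (g γ : Fin N → ℂ) : Fin N → ℂ := fun i => γ i / g i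

variable {g : Fin N → ℂ}

theorem nondeg_of_diagonal (hG : ∀ u v, Gform A c u v = ∑ i, g i * u i * v i)
    (hg : ∀ i, g i ≠ 0) : Nondeg A c := fun u hu => by
  refine funext fun i => (mul_eq_zero.1 ?_).resolve_left (hg i)
  simpa only [hG, Pi.single_apply, mul_ite, mul_one, mul_zero, sum_ite_eq', mem_univ, if_true]
    using hu (Pi.single i 1)

theorem isDual_diagDual (hG : ∀ u v, Gform A c u v = ∑ i, g i * u i * v i)
    (hg : ∀ i, g i ≠ 0) : IsDual A c (diagDual g) := fun γ _ v => by
  simp only [hG, diagDual, mul_div_cancel₀ _ (hg _), ev]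

theorem Gform_diagDual (hG : ∀ u v, Gform A c u v = ∑ i, g i * u i * v i)
    (hg : ∀ i, g i ≠ 0) (α β : Fin N → ℂ) :
    Gform A c (diagDual g α) (diagDual g β) = ∑ i, α i * β i / g i := by
  simp only [hG, diagDual, mul_div_cancel₀ _ (hg _), mul_div_assoc]

theorem G2form_diagDual (hG : ∀ u v, Gform A c u v = ∑ i, g i * u i * v i)
    (hg : ∀ i, g i ≠ 0) (u v : Fin N → ℂ) :
    G2form A c (diagDual g) u v =
      2 * ∑ k, (cubicForm A c u u (Pi.single k 1) * cubicForm A c v v (Pi.single k 1) -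
        cubicForm A c u v (Pi.single k 1) ^ 2) / g k := by
  have hcubic : ∀ a b a' b', ∑ α ∈ A, ∑ β ∈ A,
      c α * c β * Gform A c (diagDual g α) (diagDual g β) *
        (ev α a * ev α b * (ev β a' * ev β b')) =
      ∑ k, cubicForm A c a b (Pi.single k 1) * cubicForm A c a' b' (Pi.single k 1) / g k :=
    fun a b a' b' => by
      simp only [Gform_diagDual hG hg, mul_sum, sum_mul, cubicForm, sum_div, ev_single]
      rw [sum_comm]
      refine (sum_congr rfl fun α _ => ?_).trans sum_comm
      rw [sum_comm]
      exact sum_congr rfl fun β _ => sum_congr rfl fun k _ => by ring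
  simp only [G2form, pow_two (wedge _ _ _ _)]
  rw [sum_mul_wedge_mul_wedge fun α β => by rw [Gform_comm, mul_comm (c α)], hcubic, hcubic,
    ← sum_sub_distrib]
  refine congr_arg (2 * ·) (sum_congr rfl fun k _ => ?_)
  simp only [cubicForm, mul_comm (ev _ v) (ev _ u), pow_two, sub_div]

end DiagonalGram

/-! ### The four-dimensional family -/

theorem mem_zmultiples_iff_eq_div_smul {n : ℕ} (a f : Fin n → ℤ) :
    f ∈ AddSubgroup.zmultiples a ↔ f = (a ⬝ᵥ f / a ⬝ᵥ a) • a := by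
  refine ⟨?_, fun h => ⟨_, h.symm⟩⟩
  rintro ⟨m, rfl⟩
  change m • a = (a ⬝ᵥ (m • a) / a ⬝ᵥ a) • a
  obtain rfl | ha := eq_or_ne a 0
  · rw [smul_zero, smul_zero]
  · rw [dotProduct_smul, smul_eq_mul, Int.mul_ediv_cancel _ (dotProduct_self_eq_zero.not.2 ha)]

instance {n : ℕ} (a f : Fin n → ℤ) : Decidable (f ∈ AddSubgroup.zmultiples a) :=
  decidable_of_iff _ (mem_zmultiples_iff_eq_div_smul a f).symm

theorem ev_esgl4 (i : Fin 4) (u : Fin 4 → ℂ) : ev (esgl4 i) u = u i := single_one_dotProduct i u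

theorem ev_halfvec (b : Bool × Bool × Bool) (u : Fin 4 → ℂ) :
    ev (halfvec b) u = (u 0 + sgn b.1 * u 1 + sgn b.2.1 * u 2 + sgn b.2.2 * u 3) / 2 := by
  simp only [halfvec, ev_smul_left, ev_add_left, ev_esgl4]
  ring

/-- Labels of the covectors of `A4dim`: `e^i`, then `e^i ± e^j` with the pair `i < j ≤ 3` encoded
by `Fin 3` and the sign by `Bool`, then `(1/2)(e^1 ± e^2 ± e^3 ± e^4)`. -/
abbrev CovectorIndex := Fin 4 ⊕ (Fin 3 × Bool) ⊕ (Bool × Bool × Bool)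

-- Otherwise instance search ends in `Classical.propDecidable`, which `decide` cannot evaluate.
instance : DecidableEq CovectorIndex := instDecidableEqSum

namespace CovectorIndex

/-- The pairs `i < j ≤ 3`, numbered from zero. -/
def pair : Fin 3 → Fin 4 × Fin 4 := ![(0, 1), (0, 2), (1, 2)]

/-- The covector with a given label. -/
def covector : CovectorIndex → Fin 4 → ℂ
  | .inl i => esgl4 i
  | .inr (.inl (k, b)) => esgl4 (pair k).1 + sgn b • esgl4 (pair k).2
  | .inr (.inr b) => halfvec b

/-- The multiplicity of the covector with a given label. -/
def mult (r s : ℂ) : CovectorIndex → ℂ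
  | .inl i => if i = 3 then s * (s - 2 * r) / (4 * r + s) else 2 * r + s
  | .inr (.inl _) => r
  | .inr (.inr _) => s

/-- The integer counterpart of `sgn`. -/
def intSgn (b : Bool) : ℤ := if b then 1 else -1

/-- Twice the covector with a given label, with integer coordinates; statements about the finitely
many covectors are decided on these. -/
def doubled : CovectorIndex → Fin 4 → ℤ
  | .inl i => Pi.single i 2
  | .inr (.inl (k, b)) => Pi.single (pair k).1 2 + intSgn b • Pi.single (pair k).2 2
  | .inr (.inr b) => ![1, intSgn b.1, intSgn b.2.1, intSgn b.2.2]

theorem intCast_intSgn (b : Bool) : (intSgn b : ℂ) = sgn b := by cases b <;> simp [intSgn, sgn]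

theorem covector_apply (k : CovectorIndex) (i : Fin 4) : covector k i = doubled k i / 2 := by
  rcases k with j | ⟨k, b⟩ | b
  · simp only [covector, doubled, esgl4, Pi.single_apply, Int.cast_ite, Int.cast_zero]
    split_ifs <;> norm_num
  · simp only [covector, doubled, esgl4, Pi.add_apply, Pi.smul_apply, smul_eq_mul,
      Pi.single_apply, Int.cast_add, Int.cast_mul, intCast_intSgn, Int.cast_ite, Int.cast_zero]
    split_ifs <;> push_cast <;> ring
  · fin_cases i <;> simp [covector, doubled, esgl4, halfvec, intCast_intSgn, div_eq_inv_mul]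

theorem exists_pair_eq_iff (p : Fin 4 × Fin 4) : (∃ k, pair k = p) ↔ p.1 < p.2 ∧ p.2 ≠ 3 := by
  decide +revert

theorem A4dim_eq_image : A4dim = univ.image covector := by
  ext α
  have hbasis : α ∈ ({esgl4 0, esgl4 1, esgl4 2, esgl4 3} : Finset (Fin 4 → ℂ)) ↔
      ∃ i, esgl4 i = α := by
    simp only [mem_insert, mem_singleton, Fin.exists_fin_succ, eq_comm (a := α)]
    simp
  simp only [A4dim, mem_union, hbasis, mem_image, mem_filter, mem_univ, true_and,
    ← exists_pair_eq_iff, exists_exists_eq_and, Sum.exists, Prod.exists (α := Fin 3),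
    Bool.exists_bool (p := fun b => _ + sgn b • _ = _), covector, exists_or]
  simp only [sgn, if_true, Bool.false_eq_true, if_false, one_smul, neg_smul, ← sub_eq_add_neg]
  tauto

theorem collin_covector {a b : CovectorIndex} (h : Collin (covector a) (covector b)) : b = a := by
  have hprop : ∀ i j, doubled a i * doubled b j = doubled a j * doubled b i := fun i j => by
    obtain ⟨t, ht⟩ := h
    have hcoord : ∀ i, (doubled b i : ℂ) = t * doubled a i := fun i => by
      have := congr_fun ht i
      rw [Pi.smul_apply, covector_apply, covector_apply, smul_eq_mul] at this
      linear_combination 2 * this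
    exact_mod_cast show (doubled a i * doubled b j : ℂ) = doubled a j * doubled b i by
      rw [hcoord, hcoord]
      ring
  have hdecide : ∀ a b, (∀ i j, doubled a i * doubled b j = doubled a j * doubled b i) → b = a := by
    decide +kernel
  exact hdecide a b hprop

theorem injective_covector : Function.Injective covector := fun a b h =>
  collin_covector ⟨1, by rw [h, one_smul]⟩

theorem eq_of_collin_of_mem_A4dim :
    ∀ α ∈ A4dim, ∀ β ∈ A4dim, Collin α β → β = α := by
  simp only [A4dim_eq_image, forall_mem_image, mem_univ, true_imp_iff]
  exact fun a b h => congr_arg covector (collin_covector h)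

theorem exists_ev_eq_natCast : ∀ α ∈ A4dim, ∃ n : ℕ, 0 < n ∧ ev α ![10, 4, 2, 2] = n := by
  simp only [A4dim_eq_image, forall_mem_image, mem_univ, true_imp_iff]
  intro k
  have hpos : ∀ k, 0 < ∑ i, doubled k i * ![5, 2, 1, 1] i := by decide +kernel
  obtain ⟨n, hn⟩ := Int.eq_ofNat_of_zero_le (hpos k).le
  refine ⟨n, by exact_mod_cast hn ▸ hpos k, ?_⟩
  rw [← Int.cast_natCast (R := ℂ), ← hn]
  simp only [ev, covector_apply, Fin.sum_univ_four, Matrix.cons_val]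
  push_cast
  ring

theorem sum_A4dim {M : Type*} [AddCommMonoid M] (f : (Fin 4 → ℂ) → M) :
    ∑ α ∈ A4dim, f α = ∑ k, f (covector k) := by
  rw [A4dim_eq_image, sum_image injective_covector.injOn]

/-- The relation `SeriesRel` between covectors in terms of their labels. -/
def SameSeries (a b g : CovectorIndex) : Prop :=
  doubled b + doubled g ∈ AddSubgroup.zmultiples (doubled a) ∨
    doubled b - doubled g ∈ AddSubgroup.zmultiples (doubled a)

instance (a b g : CovectorIndex) : Decidable (SameSeries a b g) :=
  inferInstanceAs (Decidable (_ ∨ _))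

/-- The integers `(m, n)` with `12 (2r + s) c_β α(β^∨) = m r + n s`. -/
def dualPairing (a b : CovectorIndex) : ℤ × ℤ :=
  let x := ∑ i : Fin 3, doubled a i.castSucc * doubled b i.castSucc
  let y := doubled a 3 * doubled b 3
  match b with
  | .inl i => if i = 3 then (-2 * y, y) else (2 * x, x)
  | .inr (.inl _) => (x, 0)
  | .inr (.inr _) => (4 * y, x + y)

theorem sum_smul_dualPairing : ∀ (a g : CovectorIndex) (i j : Fin 4),
    ∑ b with SameSeries a b g,
      (doubled a i * doubled b j - doubled a j * doubled b i) • dualPairing a b = 0 := by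
  decide +kernel

theorem seriesRel_covector_iff {a b g : CovectorIndex} :
    SeriesRel (covector a) (covector b) (covector g) ↔ SameSeries a b g := by
  have hadd : ∀ m : ℤ, covector b + covector g = (m : ℂ) • covector a ↔
      m • doubled a = doubled b + doubled g := fun m => by
    simp only [funext_iff, Pi.add_apply, Pi.smul_apply, covector_apply, smul_eq_mul, ← add_div,
      mul_div_assoc', div_left_inj' (two_ne_zero' ℂ)]
    exact forall_congr' fun i => by norm_cast; exact eq_comm
  have hsub : ∀ m : ℤ, covector b - covector g = (m : ℂ) • covector a ↔
      m • doubled a = doubled b - doubled g := fun m => by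
    simp only [funext_iff, Pi.sub_apply, Pi.smul_apply, covector_apply, smul_eq_mul, ← sub_div,
      mul_div_assoc', div_left_inj' (two_ne_zero' ℂ)]
    exact forall_congr' fun i => by norm_cast; exact eq_comm
  simp only [SeriesRel, SameSeries, AddSubgroup.mem_zmultiples_iff, exists_or, hadd, hsub]

/-- The entries of the diagonal matrix of `G_𝒜` in the standard basis. -/
def gramDiag (r s : ℂ) : Fin 4 → ℂ :=
  ![3 * (2 * r + s), 3 * (2 * r + s), 3 * (2 * r + s), 3 * (2 * r + s) * s / (4 * r + s)]

theorem gramDiag_ne_zero {r s : ℂ} (h4 : 4 * r + s ≠ 0) (hp : 2 * r + s ≠ 0) (hs : s ≠ 0)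
    (i : Fin 4) : gramDiag r s i ≠ 0 := by
  fin_cases i <;> simp [gramDiag, *]

theorem mult_mul_ev_diagDual {r s : ℂ} (h4 : 4 * r + s ≠ 0) (hp : 2 * r + s ≠ 0) (hs : s ≠ 0)
    (a b : CovectorIndex) :
    mult r s b * ev (covector a) (diagDual (gramDiag r s) (covector b)) =
      (r * (dualPairing a b).1 + s * (dualPairing a b).2) / (12 * (2 * r + s)) := by
  have h4' : r * 4 + s ≠ 0 := mul_comm 4 r ▸ h4
  simp only [ev, diagDual, covector_apply, gramDiag, dualPairing, Fin.sum_univ_four,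
    Fin.sum_univ_three]
  generalize doubled a = f
  rcases b with i | ⟨k, b⟩ | b
  · fin_cases i <;>
      simp only [mult, doubled, Pi.single_apply, Fin.zero_eta, Fin.mk_one, Fin.reduceFinMk,
        Fin.reduceEq, Fin.castSucc_zero, Fin.castSucc_one, Fin.reduceCastSucc, ↓reduceIte,
        Matrix.cons_val] <;> push_cast <;> field_simp <;> ring
  · fin_cases k <;>
      simp only [mult, doubled, pair, Pi.add_apply, Pi.smul_apply, smul_eq_mul, Pi.single_apply,
        Fin.zero_eta, Fin.mk_one, Fin.reduceFinMk, Fin.reduceEq, Fin.castSucc_zero,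
        Fin.castSucc_one, Fin.reduceCastSucc, ↓reduceIte, Matrix.cons_val] <;>
      push_cast <;> field_simp <;> ring
  · simp only [mult, Fin.castSucc_zero, Fin.castSucc_one, Fin.reduceCastSucc, Matrix.cons_val]
    push_cast
    field_simp
    ring

section Multiplicities

variable {r s : ℂ} {c : (Fin 4 → ℂ) → ℂ}

theorem isTrigVSystem_A4dim (h4 : 4 * r + s ≠ 0) (hp : 2 * r + s ≠ 0) (hs : s ≠ 0)
    (hc : ∀ k, c (covector k) = mult r s k) :
    IsTrigVSystem A4dim c (diagDual (gramDiag r s)) := by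
  have hcoord : ∀ a g i j, ∑ b with SameSeries a b g,
      mult r s b * ev (covector a) (diagDual (gramDiag r s) (covector b)) *
        (covector a i * covector b j - covector a j * covector b i) = 0 := fun a g i j => by
    have h := congr_arg (fun z : ℤ × ℤ => (r * z.1 + s * z.2) / (48 * (2 * r + s)))
      (sum_smul_dualPairing a g i j)
    simp only [Prod.fst_sum, Prod.snd_sum, Int.cast_sum, mul_sum, ← sum_add_distrib, sum_div,
      Prod.fst_zero, Prod.snd_zero, Int.cast_zero, mul_zero, add_zero, zero_div] at h
    rw [← h]
    refine sum_congr rfl fun b _ => ?_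
    rw [mult_mul_ev_diagDual h4 hp hs]
    simp only [covector_apply, Prod.smul_fst, Prod.smul_snd, smul_eq_mul]
    push_cast
    field_simp
    ring
  refine isTrigVSystem_iff.2 ?_
  simp only [A4dim_eq_image, forall_mem_image, mem_univ, true_imp_iff]
  intro a g u v
  rw [← A4dim_eq_image, sum_filter, sum_A4dim, ← sum_filter]
  simp only [seriesRel_covector_iff, wedge_eq_sum, mul_sum, hc]
  rw [sum_comm]
  refine sum_eq_zero fun i _ => ?_
  rw [sum_comm]
  refine sum_eq_zero fun j _ => ?_
  simp only [← mul_assoc (_ * ev _ _), ← sum_mul]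
  rw [hcoord, zero_mul]

theorem apply_covector (hbasis : ∀ i ≠ 3, c (esgl4 i) = 2 * r + s)
    (hlast : c (esgl4 3) = s * (s - 2 * r) / (4 * r + s))
    (hpair : ∀ p : Fin 4 × Fin 4, p.1 < p.2 → p.2 ≠ 3 →
      c (esgl4 p.1 + esgl4 p.2) = r ∧ c (esgl4 p.1 - esgl4 p.2) = r)
    (hhalf : ∀ b, c (halfvec b) = s) : ∀ k, c (covector k) = mult r s k
  | .inl i => by
    by_cases hi : i = 3
    · rw [mult, if_pos hi, hi, covector, hlast]
    · rw [mult, if_neg hi, covector, hbasis i hi]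
  | .inr (.inl (k, b)) => by
    obtain ⟨hlt, hne⟩ := (exists_pair_eq_iff (pair k)).1 ⟨k, rfl⟩
    obtain ⟨hadd, hsub⟩ := hpair (pair k) hlt hne
    cases b
    · simpa only [covector, mult, sgn, Bool.false_eq_true, if_false, neg_smul, one_smul,
        ← sub_eq_add_neg] using hsub
    · simpa only [covector, mult, sgn, if_true, one_smul] using hadd
  | .inr (.inr b) => hhalf b

theorem sum_mul_A4dim (hc : ∀ k, c (covector k) = mult r s k) (f : (Fin 4 → ℂ) → ℂ) :
    ∑ α ∈ A4dim, c α * f α =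
      (2 * r + s) * (f (esgl4 0) + f (esgl4 1) + f (esgl4 2)) +
      s * (s - 2 * r) / (4 * r + s) * f (esgl4 3) +
      r * ∑ k, ∑ b, f (esgl4 (pair k).1 + sgn b • esgl4 (pair k).2) +
      s * ∑ b, f (halfvec b) := by
  simp only [sum_A4dim, hc, Fintype.sum_sum_type, Fintype.sum_prod_type (α₁ := Fin 3), mul_sum]
  simp only [covector, mult, Fin.sum_univ_four, Fin.reduceEq, ↓reduceIte]
  ring

theorem Gform_A4dim (h4 : 4 * r + s ≠ 0) (hc : ∀ k, c (covector k) = mult r s k)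
    (u v : Fin 4 → ℂ) : Gform A4dim c u v = ∑ i, gramDiag r s i * u i * v i := by
  have h4' : r * 4 + s ≠ 0 := mul_comm 4 r ▸ h4
  simp only [Gform, mul_assoc (c _), sum_mul_A4dim hc, ev_add_left, ev_smul_left, ev_esgl4,
    ev_halfvec, Fin.sum_univ_three, Fin.sum_univ_four, Fintype.sum_prod_type, Fintype.sum_bool,
    gramDiag, pair, sgn, Bool.false_eq_true, ↓reduceIte, Matrix.cons_val]
  field_simp
  ring

theorem cubicForm_A4dim (hc : ∀ k, c (covector k) = mult r s k) (u v w : Fin 4 → ℂ) :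
    cubicForm A4dim c u v w =
      (6 * r + 2 * s) * (u 0 * v 0 * w 0) + (4 * r + s) * (u 1 * v 1 * w 1) +
      (2 * r + s) * (u 2 * v 2 * w 2) + s * (s - 2 * r) / (4 * r + s) * (u 3 * v 3 * w 3) +
      (2 * r + s) * (u 0 * v 1 * w 1 + u 1 * v 0 * w 1 + u 1 * v 1 * w 0) +
      (2 * r + s) * (u 0 * v 2 * w 2 + u 2 * v 0 * w 2 + u 2 * v 2 * w 0) +
      2 * r * (u 1 * v 2 * w 2 + u 2 * v 1 * w 2 + u 2 * v 2 * w 1) +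
      s * (u 0 * v 3 * w 3 + u 3 * v 0 * w 3 + u 3 * v 3 * w 0) := by
  simp only [cubicForm, sum_mul_A4dim hc, ev_add_left, ev_smul_left, ev_esgl4,
    ev_halfvec, Fin.sum_univ_three, Fintype.sum_prod_type, Fintype.sum_bool,
    pair, sgn, Bool.false_eq_true, ↓reduceIte, Matrix.cons_val]
  ring

theorem mul_G2form_A4dim (h4 : 4 * r + s ≠ 0) (hp : 2 * r + s ≠ 0) (hs : s ≠ 0)
    (hc : ∀ k, c (covector k) = mult r s k) (u v : Fin 4 → ℂ) :
    108 * (2 * r + s) ^ 2 / (4 * r + s) * G2form A4dim c (diagDual (gramDiag r s)) u v =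
      4 * G1form A4dim c u v := by
  have h4' : r * 4 + s ≠ 0 := mul_comm 4 r ▸ h4
  rw [G2form_diagDual (Gform_A4dim h4 hc) (gramDiag_ne_zero h4 hp hs), G1form_eq]
  simp only [cubicForm_A4dim hc, Gform_A4dim h4 hc, Fin.sum_univ_four, gramDiag,
    Pi.single_apply, Fin.reduceEq, ↓reduceIte, Matrix.cons_val]
  field_simp
  ring

end Multiplicities

end CovectorIndex

/-- the four-dimensional family of configurations with multiplicities
`p = 2r + s`, `q = s(s-2r)/(4r+s)` on `e^1,e^2,e^3` resp. `e^4`, `r` on `e^i ± e^j`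
(`i < j ≤ 3`) and `s` on `(1/2)(e^1 ± e^2 ± e^3 ± e^4)` is a trigonometric ∨-system,
and with `λ² = 108(2r+s)²/(4r+s)` it satisfies the trigonometric WDVV equations. -/
theorem fourDim_trigVSystem_and_WDVV (r s pmul qmul : ℂ)
    (h4 : 4 * r + s ≠ 0)
    (hp : pmul = 2 * r + s)
    (hq : qmul = s * (s - 2 * r) / (4 * r + s))
    (hps : pmul * s ≠ 0)
    (c : (Fin 4 → ℂ) → ℂ)
    (hc1 : c (esgl4 0) = pmul ∧ c (esgl4 1) = pmul ∧ c (esgl4 2) = pmul)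
    (hc2 : c (esgl4 3) = qmul)
    (hc3 : ∀ p : Fin 4 × Fin 4, p.1 < p.2 → p.2 ≠ 3 →
      c (esgl4 p.1 + esgl4 p.2) = r ∧ c (esgl4 p.1 - esgl4 p.2) = r)
    (hc4 : ∀ b : Bool × Bool × Bool, c (halfvec b) = s) :
    (∀ dual : (Fin 4 → ℂ) → Fin 4 → ℂ, IsDual A4dim c dual →
      IsTrigVSystem A4dim c dual) ∧
    ∀ lam : ℂ, lam ^ 2 = 108 * (2 * r + s) ^ 2 / (4 * r + s) →
      SatisfiesWDVV A4dim c lam := by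
  subst hp hq
  obtain ⟨hp, hs⟩ := mul_ne_zero_iff.1 hps
  have hbasis : ∀ i ≠ 3, c (esgl4 i) = 2 * r + s := by
    simp [Fin.forall_fin_succ, hc1]
  have hc := CovectorIndex.apply_covector hbasis hc2 hc3 hc4
  have hG := CovectorIndex.Gform_A4dim h4 hc
  have hg := CovectorIndex.gramDiag_ne_zero h4 hp hs
  have hnd := nondeg_of_diagonal hG hg
  have hdual := isDual_diagDual hG hg
  have hA := CovectorIndex.isTrigVSystem_A4dim h4 hp hs hc
  refine ⟨fun dual hd => hA.of_isDual hnd hdual hd, fun lam hlam => ?_⟩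
  exact hA.satisfiesWDVV hdual hnd CovectorIndex.exists_ev_eq_natCast
    CovectorIndex.eq_of_collin_of_mem_A4dim fun u v => by
      rw [hlam, CovectorIndex.mul_G2form_A4dim h4 hp hs hc]

end
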